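/- (Inclusion–exclusion for big dual cones.) Let n = dim V. For every face A∨ of the dual arrangement H∨ and every x ∈ V: 1_{U(A∨)}(x) = Σ_{B∨} (−1)^{n − dim B∨} · 1_{V(B∨)}(x), the sum (with values in ℤ) ranging over the finitely many faces B∨ of H∨ with A∨ ≤ B∨, where 1_S denotes the indicator function of a set S and dim B∨ is the dimension of the linear span of B∨. -/

import Mathlib

/-! Basic notions for a (central, essential) arrangement of hyperplanes `H`
in a finite-dimensional real vector space, its faces, flats, the dual
arrangement and its faces, and the big/small dual cones. -/

/-- Two points `x`, `y` lie in the same face of the hyperplane arrangement `H`: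
for every hyperplane `W ∈ H` and every linear functional `f` with kernel `W`,
either `f x · f y > 0` or `f x = f y = 0`. -/
def SameFace {V : Type*} [AddCommGroup V] [Module ℝ V]
    (H : Finset (Submodule ℝ V)) (x y : V) : Prop :=
  ∀ W ∈ H, ∀ f : V →ₗ[ℝ] ℝ, LinearMap.ker f = W →
    (0 < f x * f y ∨ (f x = 0 ∧ f y = 0))

/-- A face of the arrangement `H`: an equivalence class of the relation `SameFace`. -/
def IsFace {V : Type*} [AddCommGroup V] [Module ℝ V]
    (H : Finset (Submodule ℝ V)) (A : Set V) : Prop :=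
  ∃ x : V, A = {y | SameFace H x y}

/-- A chamber is an open face. -/
def IsChamber {V : Type*} [AddCommGroup V] [Module ℝ V] [TopologicalSpace V]
    (H : Finset (Submodule ℝ V)) (A : Set V) : Prop :=
  IsFace H A ∧ IsOpen A

/-- A flat of `H`: an intersection of a subfamily of the hyperplanes
(the empty subfamily gives all of `V`). -/
def IsFlat {V : Type*} [AddCommGroup V] [Module ℝ V]
    (H : Finset (Submodule ℝ V)) (L : Submodule ℝ V) : Prop :=
  ∃ J : Finset (Submodule ℝ V), J ⊆ H ∧ L = J.inf id

/-- Two (continuous) linear functionals `f`, `g` lie in the same face of the dual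
arrangement `H∨`: for every 1-dimensional flat `l` of `H` and every `x ∈ l`,
either `f x · g x > 0` or `f x = g x = 0`. -/
def DualSameFace {V : Type*} [NormedAddCommGroup V] [NormedSpace ℝ V]
    (H : Finset (Submodule ℝ V)) (f g : V →L[ℝ] ℝ) : Prop :=
  ∀ l : Submodule ℝ V, IsFlat H l → Module.finrank ℝ l = 1 →
    ∀ x ∈ l, (0 < f x * g x ∨ (f x = 0 ∧ g x = 0))

/-- A face of the dual arrangement `H∨` in the dual space. -/
def IsDualFace {V : Type*} [NormedAddCommGroup V] [NormedSpace ℝ V]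
    (H : Finset (Submodule ℝ V)) (A : Set (V →L[ℝ] ℝ)) : Prop :=
  ∃ f : V →L[ℝ] ℝ, A = {g | DualSameFace H f g}

/-- A chamber of the dual arrangement: an open dual face. -/
def IsDualChamber {V : Type*} [NormedAddCommGroup V] [NormedSpace ℝ V]
    (H : Finset (Submodule ℝ V)) (A : Set (V →L[ℝ] ℝ)) : Prop :=
  IsDualFace H A ∧ IsOpen A

/-- The big dual cone `U(A∨)` of a dual face `A∨`. -/
def bigCone {V : Type*} [NormedAddCommGroup V] [NormedSpace ℝ V]
    (A : Set (V →L[ℝ] ℝ)) : Set V :=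
  {x | ∀ f ∈ A, 0 ≤ f x}

/-- The small dual cone `V(A∨)` of a dual face `A∨`: the intersection of the big
dual cones of all dual chambers `B∨` with `A∨ ≤ B∨`. -/
def smallCone {V : Type*} [NormedAddCommGroup V] [NormedSpace ℝ V]
    (H : Finset (Submodule ℝ V)) (A : Set (V →L[ℝ] ℝ)) : Set V :=
  ⋂ B ∈ {B : Set (V →L[ℝ] ℝ) | IsDualChamber H B ∧ A ⊆ closure B}, bigCone B

/-! Identify a point of the dual space with its sign vector on the one-dimensional flats, and let
`O` be the open half-space `{f | f x < 0}`. Then `x` lies outside the big cone of a face iff the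
face meets `O`, and outside the small cone iff the open star of the face meets `O`.

Counting faces with sign `(-1) ^ codim` assigns `1` to every nonempty open convex set, by cutting
with one hyperplane at a time. Hence the signed count of `star B ∩ O` is the complementary indicator
of the small cone of `B`. Summing over `B ≥ A` and exchanging the sums leaves, for each face `C`
meeting `O`, the signed count of the interval `[A, C]`. This count vanishes unless `A = C`, because
the interval is cut out of the open star of `A` by weak inequalities with a common direction of
recession. What remains is the indicator of whether `A` itself meets `O`. -/

theorem sign_eq_sign_iff {R : Type*} [Ring R] [LinearOrder R] [IsStrictOrderedRing R] (r s : R) :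
    SignType.sign r = SignType.sign s ↔ 0 < r * s ∨ r = 0 ∧ s = 0 := by
  rw [← sign_eq_one_iff, sign_mul, ← sign_eq_zero_iff, ← sign_eq_zero_iff (a := s)]
  generalize SignType.sign r = σ
  generalize SignType.sign s = τ
  decide +revert

theorem finrank_ker_inf_add_one {K E : Type*} [Field K] [AddCommGroup E] [Module K E]
    {φ : E →ₗ[K] K} {W : Submodule K E} [FiniteDimensional K W] {g : E} (hg : g ∈ W)
    (hφ : φ g ≠ 0) :
    Module.finrank K (φ.ker ⊓ W : Submodule K E) + 1 = Module.finrank K W := by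
  have hne : φ.domRestrict W ≠ 0 := fun h => hφ (LinearMap.congr_fun h ⟨g, hg⟩)
  rw [← Module.Dual.finrank_ker_add_one_of_ne_zero hne, LinearMap.ker_domRestrict, inf_comm,
    ← Submodule.map_comap_subtype, Submodule.finrank_map_subtype_eq]

/-- The face order, read off from sign vectors: `σ` is obtained from `τ` by replacing some entries
by `0`. -/
def SignLE {ι : Type*} (σ τ : ι → SignType) : Prop :=
  ∀ i, σ i ≠ 0 → τ i = σ i

local infix:50 "≼" => SignLE

section SignVector

variable {E ι : Type*} [AddCommGroup E] [Module ℝ E] [TopologicalSpace E]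

/-- The covector of the point `f` with respect to the family of functionals `ℓ`. Two points lie in
the same face of the arrangement of the kernels `ker (ℓ i)` iff their sign vectors agree, so faces
are encoded by the sign vectors that occur. -/
noncomputable def signVector (ℓ : ι → E →L[ℝ] ℝ) (f : E) : ι → SignType :=
  fun i => SignType.sign (ℓ i f)

/-- The face with sign vector `σ` (empty if `σ` does not occur). -/
def signFace (ℓ : ι → E →L[ℝ] ℝ) (σ : ι → SignType) : Set E :=
  {f | signVector ℓ f = σ}

/-- The open star of a face: the union of all faces above it. -/
def openStar (ℓ : ι → E →L[ℝ] ℝ) (σ : ι → SignType) : Set E :=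
  {f | σ ≼ signVector ℓ f}

/-- The family `ℓ` closed up under negation, so that each sign condition becomes a positivity
condition. -/
def signedFamily (ℓ : ι → E →L[ℝ] ℝ) : Set (E →L[ℝ] ℝ) :=
  {φ | ∃ i, φ = ℓ i ∨ φ = -ℓ i}

/-- The intersection of the kernels of the functionals indexed by `J`, a flat of the
arrangement. -/
def commonKernel (ℓ : ι → E →L[ℝ] ℝ) (J : Set ι) : Submodule ℝ E :=
  ⨅ i ∈ J, (ℓ i : E →ₗ[ℝ] ℝ).ker

theorem SignLE.refl (σ : ι → SignType) : σ ≼ σ := fun _ _ => rfl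

theorem SignLE.trans {ρ σ τ : ι → SignType} (h : ρ ≼ σ) (h' : σ ≼ τ) : ρ ≼ τ :=
  fun i hi => (h' i (h i hi ▸ hi)).trans (h i hi)

theorem SignLE.antisymm {σ τ : ι → SignType} (h : σ ≼ τ) (h' : τ ≼ σ) : σ = τ := by
  ext1 i
  by_cases hi : τ i = 0
  · by_contra hne
    exact hne ((h i (hi ▸ hne)).symm)
  · exact h' i hi

variable {ℓ : ι → E →L[ℝ] ℝ} {J : Set ι} {φ : E →L[ℝ] ℝ} {a c f g : E}

theorem neg_mem_signedFamily (hφ : φ ∈ signedFamily ℓ) : -φ ∈ signedFamily ℓ := by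
  obtain ⟨i, rfl | rfl⟩ := hφ
  exacts [⟨i, .inr rfl⟩, ⟨i, .inl (neg_neg _)⟩]

theorem finite_signedFamily [Finite ι] (ℓ : ι → E →L[ℝ] ℝ) : (signedFamily ℓ).Finite := by
  refine ((Set.finite_range ℓ).union (Set.finite_range fun i => -ℓ i)).subset ?_
  rintro φ ⟨i, rfl | rfl⟩
  exacts [.inl ⟨i, rfl⟩, .inr ⟨i, rfl⟩]

theorem signVector_signLE_iff :
    signVector ℓ f ≼ signVector ℓ g ↔ ∀ φ ∈ signedFamily ℓ, 0 < φ f → 0 < φ g := by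
  constructor
  · rintro h φ ⟨i, rfl | rfl⟩ hf
    · have := h i (by simp [signVector, hf.ne'])
      rwa [signVector, signVector, sign_pos hf, sign_eq_one_iff] at this
    · have hf : ℓ i f < 0 := by simpa using hf
      have := h i (by simp [signVector, hf.ne])
      rw [signVector, signVector, sign_neg hf, sign_eq_neg_one_iff] at this
      simpa using this
  · intro h i hi
    rcases lt_or_gt_of_ne (sign_ne_zero.1 hi) with hf | hf
    · have := h (-ℓ i) ⟨i, .inr rfl⟩ (by simpa using hf)
      rw [signVector, signVector, sign_neg hf, sign_neg (by simpa using this)]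
    · rw [signVector, signVector, sign_pos hf, sign_pos (h _ ⟨i, .inl rfl⟩ hf)]

theorem mem_openStar_signVector :
    f ∈ openStar ℓ (signVector ℓ a) ↔ ∀ φ ∈ signedFamily ℓ, 0 < φ a → 0 < φ f :=
  signVector_signLE_iff

theorem self_mem_openStar (ℓ : ι → E →L[ℝ] ℝ) (f : E) : f ∈ openStar ℓ (signVector ℓ f) :=
  SignLE.refl _

theorem signVector_signLE_iff_nonneg :
    signVector ℓ f ≼ signVector ℓ c ↔ ∀ φ ∈ signedFamily ℓ, 0 ≤ φ c → 0 ≤ φ f := by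
  rw [signVector_signLE_iff]
  constructor <;> intro h φ hφ hc <;> have := h (-φ) (neg_mem_signedFamily hφ)
  · by_contra! hf
    exact hc.not_gt (by simpa using this (by simpa using hf))
  · by_contra! hf
    exact hc.not_ge (by simpa using this (by simpa using hf))

theorem signVector_eq_iff :
    signVector ℓ f = signVector ℓ g ↔ ∀ φ ∈ signedFamily ℓ, 0 < φ f ↔ 0 < φ g := by
  constructor
  · intro h φ hφ
    exact ⟨signVector_signLE_iff.1 (h ▸ SignLE.refl _) φ hφ,
      signVector_signLE_iff.1 (h ▸ SignLE.refl _) φ hφ⟩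
  · intro h
    exact SignLE.antisymm (signVector_signLE_iff.2 fun φ hφ => (h φ hφ).1)
      (signVector_signLE_iff.2 fun φ hφ => (h φ hφ).2)

theorem signVector_add_smul_of_signLE (h : signVector ℓ a ≼ signVector ℓ c) {t : ℝ} (ht : 0 < t) :
    signVector ℓ (a + t • c) = signVector ℓ c := by
  rw [signVector_signLE_iff] at h
  refine signVector_eq_iff.2 fun φ hφ => ?_
  have hneg := h (-φ) (neg_mem_signedFamily hφ)
  simp only [map_add, map_smul, smul_eq_mul, neg_apply, Left.neg_pos_iff] at hneg ⊢
  constructor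
  · intro hpos
    by_contra! hc
    have : φ a ≤ 0 := not_lt.1 fun ha => hc.not_gt (h φ hφ ha)
    linarith [mul_nonpos_of_nonneg_of_nonpos ht.le hc]
  · intro hc
    have : 0 ≤ φ a := not_lt.1 fun ha => (hneg ha).not_gt hc
    positivity

theorem openStar_inter_signLE_eq (hac : signVector ℓ a ≼ signVector ℓ c) :
    openStar ℓ (signVector ℓ a) ∩ {f | signVector ℓ f ≼ signVector ℓ c} =
      openStar ℓ (signVector ℓ a) ∩
        {f | ∀ φ ∈ signedFamily ℓ, φ a = 0 → 0 ≤ φ c → 0 ≤ φ f} := by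
  ext f
  refine and_congr_right fun hf => ?_
  rw [mem_openStar_signVector] at hf
  rw [signVector_signLE_iff_nonneg] at hac
  rw [Set.mem_ofPred_eq, Set.mem_ofPred_eq, signVector_signLE_iff_nonneg]
  refine forall₂_congr fun φ hφ => ⟨fun h _ hc => h hc, fun h hc => ?_⟩
  rcases (hac φ hφ hc).eq_or_lt with ha | ha
  exacts [h ha.symm hc, (hf φ hφ ha).le]

theorem exists_pos_eq_zero_of_not_signLE (hac : signVector ℓ a ≼ signVector ℓ c)
    (hca : ¬signVector ℓ c ≼ signVector ℓ a) :
    ∃ φ ∈ signedFamily ℓ, φ a = 0 ∧ 0 < φ c := by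
  rw [signVector_signLE_iff] at hca
  push Not at hca
  obtain ⟨φ, hφ, hc, ha⟩ := hca
  exact ⟨φ, hφ, ha.antisymm (signVector_signLE_iff_nonneg.1 hac φ hφ hc.le), hc⟩

theorem add_smul_mem_openStar (hf : f ∈ openStar ℓ (signVector ℓ a))
    (hg : g ∈ openStar ℓ (signVector ℓ a)) {t : ℝ} (ht : 0 ≤ t) :
    f + t • g ∈ openStar ℓ (signVector ℓ a) := by
  rw [mem_openStar_signVector] at hf hg ⊢
  intro φ hφ ha
  rw [map_add, map_smul, smul_eq_mul]
  exact add_pos_of_pos_of_nonneg (hf φ hφ ha) (mul_nonneg ht (hg φ hφ ha).le)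

theorem mem_commonKernel : f ∈ commonKernel ℓ J ↔ ∀ i ∈ J, ℓ i f = 0 := by
  simp [commonKernel]

theorem signFace_eq_commonKernel_inter_openStar (ℓ : ι → E →L[ℝ] ℝ) (f : E) :
    signFace ℓ (signVector ℓ f) =
      (commonKernel ℓ {i | ℓ i f = 0} ∩ openStar ℓ (signVector ℓ f) : Set E) := by
  ext g
  simp only [Set.mem_inter_iff, SetLike.mem_coe, mem_commonKernel, Set.mem_ofPred_eq]
  constructor
  · intro hg
    have hg : signVector ℓ g = signVector ℓ f := hg
    refine ⟨fun i hi => sign_eq_zero_iff.1 ?_, fun i _ => congrFun hg i⟩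
    exact (congrFun hg i).trans (by simp [signVector, hi])
  · rintro ⟨hker, hstar⟩
    ext1 i
    by_cases hi : ℓ i f = 0
    · simp [signVector, hi, hker i hi]
    · exact hstar i (sign_ne_zero.2 hi)

theorem convex_openStar (ℓ : ι → E →L[ℝ] ℝ) (a : E) :
    Convex ℝ (openStar ℓ (signVector ℓ a)) := by
  have : openStar ℓ (signVector ℓ a) = ⋂ φ ∈ signedFamily ℓ, ⋂ (_ : 0 < φ a), {f | 0 < φ f} := by
    ext f
    simp [mem_openStar_signVector]
  rw [this]
  exact convex_iInter₂ fun φ _ => convex_iInter fun _ =>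
    convex_halfSpace_gt φ.toLinearMap.isLinear 0

theorem isOpen_openStar [Finite ι] (ℓ : ι → E →L[ℝ] ℝ) (a : E) :
    IsOpen (openStar ℓ (signVector ℓ a)) := by
  have : openStar ℓ (signVector ℓ a) = ⋂ φ ∈ {φ ∈ signedFamily ℓ | 0 < φ a}, {f | 0 < φ f} := by
    ext f
    simp [mem_openStar_signVector]
  rw [this]
  exact ((finite_signedFamily ℓ).sep _).isOpen_biInter fun φ _ =>
    isOpen_lt continuous_const φ.continuous

theorem isOpen_signFace_of_forall_ne_zero [Finite ι] (hf : ∀ i, ℓ i f ≠ 0) :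
    IsOpen (signFace ℓ (signVector ℓ f)) := by
  have : commonKernel ℓ {i | ℓ i f = 0} = ⊤ := by simp [commonKernel, hf]
  rw [signFace_eq_commonKernel_inter_openStar, this, Submodule.top_coe, Set.univ_inter]
  exact isOpen_openStar ℓ f

variable [IsTopologicalAddGroup E] [ContinuousSMul ℝ E]

theorem exists_pos_add_smul_mem {O : Set E} (hO : IsOpen O) {f : E} (hf : f ∈ O) (g : E) :
    ∃ t : ℝ, 0 < t ∧ f + t • g ∈ O := by
  have hcont : Continuous fun t : ℝ => f + t • g := by fun_prop
  have hnear : ∀ᶠ t in nhds (0 : ℝ), f + t • g ∈ O :=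
    hcont.continuousAt.eventually_mem (hO.mem_nhds (by simpa using hf))
  exact ((eventually_nhdsWithin_of_eventually_nhds hnear).and
    (self_mem_nhdsWithin (s := Set.Ioi 0))).exists.imp fun t ht => ⟨ht.2, ht.1⟩

theorem exists_forall_ne_zero_mem_of_isOpen [Finite ι] (hℓ : ∀ i, ℓ i ≠ 0) {O : Set E}
    (hO : IsOpen O) (hne : O.Nonempty) : ∃ f ∈ O, ∀ i, ℓ i f ≠ 0 := by
  obtain ⟨f, hf⟩ := hne
  obtain ⟨g, hg⟩ := Module.Dual.exists_forall_ne_zero_of_forall_exists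
    (fun i => (ℓ i : E →ₗ[ℝ] ℝ)) fun i => DFunLike.ne_iff.1 (hℓ i)
  obtain ⟨t, ht, htO, hstar⟩ := exists_pos_add_smul_mem (hO.inter (isOpen_openStar ℓ f))
    ⟨hf, self_mem_openStar ℓ f⟩ g
  refine ⟨f + t • g, htO, fun i => ?_⟩
  by_cases hi : ℓ i f = 0
  · simpa [hi, ht.ne'] using hg i
  · have hi' : signVector ℓ f i ≠ 0 := sign_ne_zero.2 hi
    exact sign_ne_zero.1 ((hstar i hi').trans_ne hi')

theorem signFace_subset_closure_iff [Finite ι] :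
    signFace ℓ (signVector ℓ a) ⊆ closure (signFace ℓ (signVector ℓ c)) ↔
      signVector ℓ a ≼ signVector ℓ c := by
  constructor
  · intro h
    obtain ⟨g, hga, hgc⟩ := mem_closure_iff.1 (h (rfl : a ∈ signFace ℓ _)) _
      (isOpen_openStar ℓ a) (self_mem_openStar ℓ a)
    exact (hgc : signVector ℓ g = _) ▸ hga
  · intro h f hf
    refine mem_closure_iff.2 fun O hO hfO => ?_
    obtain ⟨t, ht, htO⟩ := exists_pos_add_smul_mem hO hfO c
    exact ⟨_, htO, signVector_add_smul_of_signLE ((hf : signVector ℓ f = _) ▸ h) ht⟩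

theorem span_commonKernel_inter {U : Set E} (hU : IsOpen U)
    (hne : (commonKernel ℓ J ∩ U : Set E).Nonempty) :
    Submodule.span ℝ (commonKernel ℓ J ∩ U : Set E) = commonKernel ℓ J := by
  refine le_antisymm (Submodule.span_le.2 Set.inter_subset_left) fun g hg => ?_
  obtain ⟨f, hf⟩ := hne
  obtain ⟨t, ht, htU⟩ := exists_pos_add_smul_mem hU hf.2 g
  have hfg : f + t • g ∈ Submodule.span ℝ (commonKernel ℓ J ∩ U : Set E) :=
    Submodule.subset_span ⟨add_mem hf.1 (Submodule.smul_mem _ t hg), htU⟩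
  exact (Submodule.smul_mem_iff _ ht.ne').1
    ((Submodule.add_mem_iff_right _ (Submodule.subset_span hf)).1 hfg)

theorem span_signFace [Finite ι] (ℓ : ι → E →L[ℝ] ℝ) (f : E) :
    Submodule.span ℝ (signFace ℓ (signVector ℓ f)) = commonKernel ℓ {i | ℓ i f = 0} := by
  have hf : f ∈ signFace ℓ (signVector ℓ f) := rfl
  rw [signFace_eq_commonKernel_inter_openStar] at hf ⊢
  exact span_commonKernel_inter (isOpen_openStar ℓ f) ⟨f, hf⟩

end SignVector

section EulerSum

variable {E ι : Type*} [AddCommGroup E] [Module ℝ E] [TopologicalSpace E]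

/-- `(-1)` to the codimension of the face with sign vector `σ`. -/
noncomputable def codimSign (ℓ : ι → E →L[ℝ] ℝ) (σ : ι → SignType) : ℤ :=
  (-1) ^ (Module.finrank ℝ E - Module.finrank ℝ (Submodule.span ℝ (signFace ℓ σ)))

/-- The sign vectors of the faces that meet `S`. -/
noncomputable def signVectorsOf [Finite ι] (ℓ : ι → E →L[ℝ] ℝ) (S : Set E) :
    Finset (ι → SignType) :=
  (signVector ℓ '' S).toFinite.toFinset

/-- The combinatorial Euler characteristic of `S`: the faces that meet `S`, counted with sign
`(-1) ^ codim`. The codimension, rather than the dimension, makes the value on a nonempty open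
convex set equal to `1`. -/
noncomputable def eulerSum [Finite ι] (ℓ : ι → E →L[ℝ] ℝ) (S : Set E) : ℤ :=
  ∑ σ ∈ signVectorsOf ℓ S, codimSign ℓ σ

variable {ℓ : ι → E →L[ℝ] ℝ} {J : Set ι} {φ : E →L[ℝ] ℝ} {f g : E} {O S T U : Set E}

theorem codimSign_mul_self (ℓ : ι → E →L[ℝ] ℝ) (σ : ι → SignType) :
    codimSign ℓ σ * codimSign ℓ σ = 1 := by
  rw [codimSign, ← mul_pow]
  simp

theorem exists_mem_eq_zero_of_sign_ne [IsTopologicalAddGroup E] [ContinuousSMul ℝ E]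
    (hS : Convex ℝ S) (hf : f ∈ S) (hg : g ∈ S)
    (hne : SignType.sign (φ f) ≠ SignType.sign (φ g)) : ∃ h ∈ S, φ h = 0 := by
  have hzero : (0 : ℝ) ∈ Set.uIcc (φ f) (φ g) := by
    by_contra hmem
    rw [Set.mem_uIcc] at hmem
    push Not at hmem
    rcases lt_trichotomy (φ f) 0 with h | h | h
    · exact hne (by rw [sign_neg h, sign_neg (hmem.1 h.le)])
    · rcases le_total 0 (φ g) with h' | h'
      exacts [(hmem.1 h.le).not_ge h', (hmem.2 h').ne h]
    · exact hne (by rw [sign_pos h, sign_pos (not_le.1 fun h' => (hmem.2 h').not_gt h)])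
  exact (hS.isPreconnected.image φ φ.continuous.continuousOn).ordConnected.uIcc_subset
    (Set.mem_image_of_mem φ hf) (Set.mem_image_of_mem φ hg) hzero

theorem exists_mem_eq_zero_pos_neg_of_sign_ne [IsTopologicalAddGroup E] [ContinuousSMul ℝ E]
    {W : Submodule ℝ E} (hU : IsOpen U) (hconv : Convex ℝ U) (hf : f ∈ (W ∩ U : Set E))
    (hg : g ∈ (W ∩ U : Set E)) (hne : SignType.sign (φ f) ≠ SignType.sign (φ g)) :
    (∃ h ∈ (W ∩ U : Set E), φ h = 0) ∧ (∃ h ∈ (W ∩ U : Set E), 0 < φ h) ∧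
      ∃ h ∈ (W ∩ U : Set E), φ h < 0 := by
  obtain ⟨h, hh, hφh⟩ := exists_mem_eq_zero_of_sign_ne (W.convex.inter hconv) hf hg hne
  obtain ⟨u, huW, hu⟩ : ∃ u ∈ W, φ u ≠ 0 := by
    by_contra! hzero
    exact hne (by rw [hzero f hf.1, hzero g hg.1])
  have hmove : ∀ r : ℝ, ∃ t : ℝ, 0 < t ∧ h + t • r • u ∈ (W ∩ U : Set E) := fun r => by
    obtain ⟨t, ht, htU⟩ := exists_pos_add_smul_mem hU hh.2 (r • u)
    exact ⟨t, ht, add_mem hh.1 (W.smul_mem t (W.smul_mem r huW)), htU⟩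
  obtain ⟨t, ht, htU⟩ := hmove (φ u)
  obtain ⟨t', ht', htU'⟩ := hmove (-φ u)
  have hsq : 0 < φ u * φ u := mul_self_pos.2 hu
  refine ⟨⟨h, hh, hφh⟩, ⟨_, htU, ?_⟩, ⟨_, htU', ?_⟩⟩
  · simpa [hφh] using mul_pos ht hsq
  · simpa [hφh] using mul_pos ht' hsq

theorem commonKernel_insert_inter (i : ι) (J : Set ι) (U : Set E) :
    (commonKernel ℓ (insert i J) ∩ U : Set E) =
      (commonKernel ℓ J ∩ U ∩ {f | ℓ i f = 0} : Set E) := by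
  ext f
  simp only [commonKernel, iInf_insert, Submodule.coe_inf, Set.mem_inter_iff]
  exact and_assoc.trans and_comm

theorem neg_one_pow_codim_commonKernel_insert [FiniteDimensional ℝ E] {i : ι}
    (hg : g ∈ commonKernel ℓ J) (hi : ℓ i g ≠ 0) :
    (-1 : ℤ) ^ (Module.finrank ℝ E - Module.finrank ℝ (commonKernel ℓ (insert i J))) =
      -(-1) ^ (Module.finrank ℝ E - Module.finrank ℝ (commonKernel ℓ J)) := by
  have hrank := finrank_ker_inf_add_one (φ := (ℓ i).toLinearMap) hg hi
  have hle := Submodule.finrank_le (commonKernel ℓ J)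
  have hins : commonKernel ℓ (insert i J) = (ℓ i).toLinearMap.ker ⊓ commonKernel ℓ J := iInf_insert
  obtain ⟨k, hk⟩ := Nat.exists_eq_add_of_le hle
  have hcodim : Module.finrank ℝ E - Module.finrank ℝ (commonKernel ℓ (insert i J)) = k + 1 := by
    rw [hins]
    omega
  rw [hcodim, hk, Nat.add_sub_cancel_left, pow_succ, mul_neg_one]

variable [Finite ι]

theorem mem_signVectorsOf {σ : ι → SignType} :
    σ ∈ signVectorsOf ℓ S ↔ ∃ f ∈ S, signVector ℓ f = σ := by
  simp [signVectorsOf]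

theorem injOn_signFace (ℓ : ι → E →L[ℝ] ℝ) (S : Set E) :
    Set.InjOn (signFace ℓ) (signVectorsOf ℓ S) := by
  intro σ hσ τ _ hστ
  obtain ⟨f, -, rfl⟩ := mem_signVectorsOf.1 hσ
  have : f ∈ signFace ℓ τ := hστ ▸ rfl
  exact this

theorem card_signVectorsOf_lt (i : ι) (hTS : T ⊆ S) (hf : f ∈ S)
    (hT : ∀ g ∈ T, SignType.sign (ℓ i g) ≠ SignType.sign (ℓ i f)) :
    (signVectorsOf ℓ T).card < (signVectorsOf ℓ S).card := by
  have hsub : signVectorsOf ℓ T ⊆ signVectorsOf ℓ S := fun σ hσ => by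
    obtain ⟨g, hg, rfl⟩ := mem_signVectorsOf.1 hσ
    exact mem_signVectorsOf.2 ⟨g, hTS hg, rfl⟩
  refine Finset.card_lt_card ((Finset.ssubset_iff_of_subset hsub).2
    ⟨signVector ℓ f, mem_signVectorsOf.2 ⟨f, hf, rfl⟩, fun hfT => ?_⟩)
  obtain ⟨g, hg, hgf⟩ := mem_signVectorsOf.1 hfT
  exact hT g hg (congrFun hgf i)

theorem eulerSum_inter_add_sdiff (S : Set E)
    (hT : ∀ f g, signVector ℓ f = signVector ℓ g → f ∈ T → g ∈ T) :
    eulerSum ℓ (S ∩ T) + eulerSum ℓ (S \ T) = eulerSum ℓ S := by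
  classical
  have hin : signVectorsOf ℓ (S ∩ T) =
      {σ ∈ signVectorsOf ℓ S | ∃ f ∈ T, signVector ℓ f = σ} := by
    ext σ
    simp only [Finset.mem_filter, mem_signVectorsOf]
    constructor
    · rintro ⟨f, ⟨hfS, hfT⟩, rfl⟩
      exact ⟨⟨f, hfS, rfl⟩, f, hfT, rfl⟩
    · rintro ⟨⟨f, hfS, rfl⟩, g, hgT, hgf⟩
      exact ⟨f, ⟨hfS, hT g f hgf hgT⟩, rfl⟩
  have hout : signVectorsOf ℓ (S \ T) =
      {σ ∈ signVectorsOf ℓ S | ¬∃ f ∈ T, signVector ℓ f = σ} := by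
    ext σ
    simp only [Finset.mem_filter, mem_signVectorsOf]
    constructor
    · rintro ⟨f, ⟨hfS, hfT⟩, rfl⟩
      exact ⟨⟨f, hfS, rfl⟩, fun ⟨g, hgT, hgf⟩ => hfT (hT g f hgf hgT)⟩
    · rintro ⟨⟨f, hfS, rfl⟩, hnot⟩
      exact ⟨f, ⟨hfS, fun hfT => hnot ⟨f, hfT, rfl⟩⟩, rfl⟩
  rw [eulerSum, eulerSum, hin, hout, Finset.sum_filter_add_sum_filter_not, eulerSum]

theorem eulerSum_inter_nonneg_add_inter_neg (hφ : φ ∈ signedFamily ℓ) (S : Set E) :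
    eulerSum ℓ (S ∩ {f | 0 ≤ φ f}) + eulerSum ℓ (S ∩ {f | φ f < 0}) = eulerSum ℓ S := by
  have hcompl : S ∩ {f | φ f < 0} = S \ {f | 0 ≤ φ f} := by
    ext f
    simp
  rw [hcompl]
  refine eulerSum_inter_add_sdiff S fun f g hfg (hf : 0 ≤ φ f) => ?_
  change 0 ≤ φ g
  by_contra! hg
  have := (signVector_eq_iff.1 hfg (-φ) (neg_mem_signedFamily hφ)).2 (by simpa using hg)
  exact hf.not_gt (by simpa using this)

theorem eulerSum_trichotomy (i : ι) (S : Set E) :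
    eulerSum ℓ S = eulerSum ℓ (S ∩ {f | ℓ i f = 0}) + eulerSum ℓ (S ∩ {f | 0 < ℓ i f}) +
      eulerSum ℓ (S ∩ {f | ℓ i f < 0}) := by
  have hzero : S ∩ {f | 0 ≤ ℓ i f} ∩ {f | 0 ≤ (-ℓ i) f} = S ∩ {f | ℓ i f = 0} := by
    ext f
    simp [and_assoc, le_antisymm_iff, and_comm]
  have hpos : S ∩ {f | 0 ≤ ℓ i f} ∩ {f | (-ℓ i) f < 0} = S ∩ {f | 0 < ℓ i f} := by
    ext f
    simpa [and_assoc] using fun _ => le_of_lt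
  rw [← eulerSum_inter_nonneg_add_inter_neg (φ := ℓ i) ⟨i, .inl rfl⟩ S,
    ← eulerSum_inter_nonneg_add_inter_neg (φ := -ℓ i) ⟨i, .inr rfl⟩ (S ∩ _), hzero, hpos]

theorem eulerSum_eq_codimSign (hf : f ∈ S) (hconst : ∀ g ∈ S, signVector ℓ g = signVector ℓ f) :
    eulerSum ℓ S = codimSign ℓ (signVector ℓ f) := by
  have : signVectorsOf ℓ S = {signVector ℓ f} := by
    ext σ
    rw [mem_signVectorsOf, Finset.mem_singleton]
    exact ⟨fun ⟨g, hg, hσ⟩ => hσ ▸ hconst g hg, fun hσ => ⟨f, hf, hσ.symm⟩⟩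
  rw [eulerSum, this, Finset.sum_singleton]

variable [IsTopologicalAddGroup E] [ContinuousSMul ℝ E]

theorem codimSign_of_const_on_commonKernel_inter (hU : IsOpen U)
    (hf : f ∈ (commonKernel ℓ J ∩ U : Set E))
    (hconst : ∀ g ∈ (commonKernel ℓ J ∩ U : Set E), signVector ℓ g = signVector ℓ f) :
    codimSign ℓ (signVector ℓ f) =
      (-1) ^ (Module.finrank ℝ E - Module.finrank ℝ (commonKernel ℓ J)) := by
  have hspan : Submodule.span ℝ (signFace ℓ (signVector ℓ f)) = commonKernel ℓ J := by
    refine le_antisymm ?_ ?_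
    · rw [span_signFace]
      intro g hg
      exact mem_commonKernel.2 fun i hi => mem_commonKernel.1 hg i (mem_commonKernel.1 hf.1 i hi)
    · rw [← span_commonKernel_inter hU ⟨f, hf⟩]
      exact Submodule.span_mono hconst
  rw [codimSign, hspan]

variable [FiniteDimensional ℝ E]

theorem eulerSum_commonKernel_inter (hU : IsOpen U) (hconv : Convex ℝ U)
    (hne : (commonKernel ℓ J ∩ U : Set E).Nonempty) :
    eulerSum ℓ (commonKernel ℓ J ∩ U) =
      (-1) ^ (Module.finrank ℝ E - Module.finrank ℝ (commonKernel ℓ J)) := by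
  induction hcard : (signVectorsOf ℓ (commonKernel ℓ J ∩ U)).card using Nat.strong_induction_on
    generalizing J U with
  | _ m ih =>
    subst hcard
    obtain ⟨f, hf⟩ := hne
    by_cases hconst : ∀ g ∈ (commonKernel ℓ J ∩ U : Set E), signVector ℓ g = signVector ℓ f
    · rw [eulerSum_eq_codimSign hf hconst, codimSign_of_const_on_commonKernel_inter hU hf hconst]
    push Not at hconst
    obtain ⟨g, hg, hgf⟩ := hconst
    obtain ⟨i, hi⟩ := Function.ne_iff.1 hgf
    -- `ker (ℓ i)` cuts the set into two pieces of the same dimension and one of dimension one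
    -- less, which contribute `ε + ε - ε = ε`.
    obtain ⟨⟨z, hz, hiz⟩, ⟨p, hp, hip⟩, ⟨q, hq, hiq⟩⟩ :=
      exists_mem_eq_zero_pos_neg_of_sign_ne hU hconv hg hf hi
    have hzero := ih _ (card_signVectorsOf_lt i (T := commonKernel ℓ (insert i J) ∩ U)
      ((commonKernel_insert_inter i J U).trans_subset Set.inter_subset_left) hp fun g hg => by
        rw [commonKernel_insert_inter] at hg
        simp [hg.2.out, sign_pos hip])
      hU hconv ⟨z, (commonKernel_insert_inter i J U).symm ▸ ⟨hz, hiz⟩⟩ rfl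
    have hpos := ih _ (card_signVectorsOf_lt i (T := commonKernel ℓ J ∩ (U ∩ {f | 0 < ℓ i f}))
      (Set.inter_subset_inter_right _ Set.inter_subset_left) hz fun g hg => by
        simp [hiz, hg.2.2.out.ne'])
      (hU.inter (isOpen_lt continuous_const (ℓ i).continuous))
      (hconv.inter (convex_halfSpace_gt (ℓ i).toLinearMap.isLinear 0)) ⟨p, hp.1, hp.2, hip⟩ rfl
    have hneg := ih _ (card_signVectorsOf_lt i (T := commonKernel ℓ J ∩ (U ∩ {f | ℓ i f < 0}))
      (Set.inter_subset_inter_right _ Set.inter_subset_left) hz fun g hg => by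
        simp [hiz, hg.2.2.out.ne])
      (hU.inter (isOpen_lt (ℓ i).continuous continuous_const))
      (hconv.inter (convex_halfSpace_lt (ℓ i).toLinearMap.isLinear 0)) ⟨q, hq.1, hq.2, hiq⟩ rfl
    rw [eulerSum_trichotomy i, ← commonKernel_insert_inter, Set.inter_assoc, Set.inter_assoc,
      hzero, hpos, hneg, neg_one_pow_codim_commonKernel_insert hp.1 hip.ne']
    ring

open Classical in
theorem eulerSum_of_isOpen_of_convex (ℓ : ι → E →L[ℝ] ℝ) (hO : IsOpen O) (hconv : Convex ℝ O) :
    eulerSum ℓ O = if O.Nonempty then 1 else 0 := by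
  split_ifs with hne
  · have htop : commonKernel ℓ ∅ = ⊤ := by simp [commonKernel]
    have huniv : (commonKernel ℓ ∅ ∩ O : Set E) = O := by simp [htop]
    rw [← huniv, eulerSum_commonKernel_inter hO hconv (huniv.symm ▸ hne), htop, finrank_top,
      Nat.sub_self, pow_zero]
  · simp [eulerSum, signVectorsOf, Set.not_nonempty_iff_eq_empty.1 hne]

end EulerSum

section Inversion

variable {E ι : Type*} [AddCommGroup E] [Module ℝ E] [TopologicalSpace E] [Finite ι]
  [IsTopologicalAddGroup E] [ContinuousSMul ℝ E] [FiniteDimensional ℝ E]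
  {ℓ : ι → E →L[ℝ] ℝ} {a c d : E} {O : Set E}

theorem eulerSum_inter_nonneg_eq_zero {ψ : E →L[ℝ] ℝ} {Φ : Finset (E →L[ℝ] ℝ)}
    (hψ : ψ ∈ signedFamily ℓ) (hψd : ψ d < 0) (hΦ : ∀ φ ∈ Φ, φ ∈ signedFamily ℓ)
    (hΦd : ∀ φ ∈ Φ, φ d ≤ 0) (hO : IsOpen O) (hconv : Convex ℝ O)
    (hrec : ∀ f ∈ O, ∀ t : ℝ, 0 ≤ t → f + t • d ∈ O) :
    eulerSum ℓ (O ∩ {f | 0 ≤ ψ f} ∩ {f | ∀ φ ∈ Φ, 0 ≤ φ f}) = 0 := by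
  classical
  induction Φ using Finset.induction_on generalizing O with
  | empty =>
    have hneg : (O ∩ {f | ψ f < 0}).Nonempty ↔ O.Nonempty := by
      refine ⟨fun h => h.left, fun ⟨f, hf⟩ => ?_⟩
      obtain ⟨t, ht⟩ := exists_gt (max 0 (ψ f / -ψ d))
      obtain ⟨ht₀, ht⟩ := max_lt_iff.1 ht
      have := (div_lt_iff₀ (neg_pos.2 hψd)).1 ht
      refine ⟨f + t • d, hrec f hf t ht₀.le, ?_⟩
      simp only [Set.mem_ofPred_eq, map_add, map_smul, smul_eq_mul]
      linarith
    have hsplit := eulerSum_inter_nonneg_add_inter_neg hψ O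
    rw [eulerSum_of_isOpen_of_convex ℓ hO hconv, eulerSum_of_isOpen_of_convex ℓ
      (hO.inter (isOpen_lt ψ.continuous continuous_const))
      (hconv.inter (convex_halfSpace_lt ψ.toLinearMap.isLinear 0)), if_congr hneg rfl rfl] at hsplit
    simpa using hsplit
  | insert φ Φ _ ih =>
    rw [Finset.forall_mem_insert] at hΦ hΦd
    have hnonneg : O ∩ {f | 0 ≤ ψ f} ∩ {f | ∀ φ' ∈ insert φ Φ, 0 ≤ φ' f} =
        O ∩ {f | 0 ≤ ψ f} ∩ {f | ∀ φ' ∈ Φ, 0 ≤ φ' f} ∩ {f | 0 ≤ φ f} := by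
      ext f
      simp only [Finset.forall_mem_insert, Set.mem_inter_iff, Set.mem_ofPred_eq]
      tauto
    have hneg : O ∩ {f | 0 ≤ ψ f} ∩ {f | ∀ φ' ∈ Φ, 0 ≤ φ' f} ∩ {f | φ f < 0} =
        O ∩ {f | φ f < 0} ∩ {f | 0 ≤ ψ f} ∩ {f | ∀ φ' ∈ Φ, 0 ≤ φ' f} := by
      simp only [Set.inter_assoc, Set.inter_comm, Set.inter_left_comm]
    have hsplit := eulerSum_inter_nonneg_add_inter_neg hΦ.1
      (O ∩ {f | 0 ≤ ψ f} ∩ {f | ∀ φ' ∈ Φ, 0 ≤ φ' f})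
    rw [← hnonneg, hneg, ih hΦ.2 hΦd.2 hO hconv hrec, ih hΦ.2 hΦd.2
      (hO.inter (isOpen_lt φ.continuous continuous_const))
      (hconv.inter (convex_halfSpace_lt φ.toLinearMap.isLinear 0)), add_zero] at hsplit
    · exact hsplit
    · refine fun f hf t ht => ⟨hrec f hf.1 t ht, ?_⟩
      have := hf.2.out
      simp only [Set.mem_ofPred_eq, map_add, map_smul, smul_eq_mul]
      linarith [mul_nonpos_of_nonneg_of_nonpos ht hΦd.1]

theorem eulerSum_interval_of_not_signLE (hac : signVector ℓ a ≼ signVector ℓ c)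
    (hca : ¬signVector ℓ c ≼ signVector ℓ a) :
    eulerSum ℓ (openStar ℓ (signVector ℓ a) ∩ {f | signVector ℓ f ≼ signVector ℓ c}) = 0 := by
  obtain ⟨ψ, hψ, hψa, hψc⟩ := exists_pos_eq_zero_of_not_signLE hac hca
  let Φ : Set (E →L[ℝ] ℝ) := {φ ∈ signedFamily ℓ | φ a = 0 ∧ 0 ≤ φ c}
  have hΦfin : Φ.Finite := (finite_signedFamily ℓ).sep _
  -- Moving from `a` slightly away from `c` gives a direction along which the open star recedes
  -- while no `φ ∈ Φ` increases and `ψ` decreases.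
  obtain ⟨t, ht, hd⟩ := exists_pos_add_smul_mem (isOpen_openStar ℓ a) (self_mem_openStar ℓ a) (-c)
  have hd_of_zero : ∀ φ : E →L[ℝ] ℝ, φ a = 0 → φ (a + t • -c) = -(t * φ c) := by
    intro φ hφ
    simp [hφ]
  have hset : openStar ℓ (signVector ℓ a) ∩ {f | signVector ℓ f ≼ signVector ℓ c} =
      openStar ℓ (signVector ℓ a) ∩ {f | 0 ≤ ψ f} ∩ {f | ∀ φ ∈ hΦfin.toFinset, 0 ≤ φ f} := by
    rw [openStar_inter_signLE_eq hac, Set.inter_assoc]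
    congr 1
    ext f
    simp only [Set.mem_inter_iff, Set.mem_ofPred_eq, Set.Finite.mem_toFinset, Φ]
    exact ⟨fun h => ⟨h ψ hψ hψa hψc.le, fun φ hφ => h φ hφ.1 hφ.2.1 hφ.2.2⟩,
      fun h φ hφ ha hc => h.2 φ ⟨hφ, ha, hc⟩⟩
  rw [hset]
  refine eulerSum_inter_nonneg_eq_zero (d := a + t • -c) hψ ?_ ?_ ?_ (isOpen_openStar ℓ a)
    (convex_openStar ℓ a) fun f hf s hs => add_smul_mem_openStar hf hd hs
  · exact (hd_of_zero ψ hψa).trans_lt (neg_neg_of_pos (mul_pos ht hψc))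
  · exact fun φ hφ => (hΦfin.mem_toFinset.1 hφ).1
  · intro φ hφ
    obtain ⟨-, ha, hc⟩ := hΦfin.mem_toFinset.1 hφ
    exact (hd_of_zero φ ha).trans_le (neg_nonpos.2 (mul_nonneg ht.le hc))

open Classical in
theorem eulerSum_interval (ℓ : ι → E →L[ℝ] ℝ) (a c : E) :
    eulerSum ℓ (openStar ℓ (signVector ℓ a) ∩ {f | signVector ℓ f ≼ signVector ℓ c}) =
      if signVector ℓ a = signVector ℓ c then codimSign ℓ (signVector ℓ c) else 0 := by
  split_ifs with hac
  · rw [← hac]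
    exact eulerSum_eq_codimSign ⟨self_mem_openStar ℓ a, SignLE.refl _⟩
      fun f hf => SignLE.antisymm hf.2 hf.1
  by_cases hle : signVector ℓ a ≼ signVector ℓ c
  · exact eulerSum_interval_of_not_signLE hle fun hge => hac (hle.antisymm hge)
  · have : openStar ℓ (signVector ℓ a) ∩ {f | signVector ℓ f ≼ signVector ℓ c} = ∅ :=
      Set.eq_empty_of_forall_notMem fun f hf => hle (SignLE.trans hf.1 hf.2)
    simp [this, eulerSum, signVectorsOf]

open Classical in
theorem sum_codimSign_mul_openStar_inter_nonempty (ℓ : ι → E →L[ℝ] ℝ) (a : E) (hO : IsOpen O)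
    (hconv : Convex ℝ O) :
    ∑ β ∈ signVectorsOf ℓ (openStar ℓ (signVector ℓ a)),
        codimSign ℓ β * (if (openStar ℓ β ∩ O).Nonempty then 1 else 0) =
      if (signFace ℓ (signVector ℓ a) ∩ O).Nonempty then 1 else 0 := by
  let interval (γ : ι → SignType) : Set E := openStar ℓ (signVector ℓ a) ∩ {f | signVector ℓ f ≼ γ}
  calc
    _ = ∑ β ∈ signVectorsOf ℓ (openStar ℓ (signVector ℓ a)),
          ∑ γ ∈ signVectorsOf ℓ (openStar ℓ β ∩ O), codimSign ℓ β * codimSign ℓ γ := by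
      refine Finset.sum_congr rfl fun β hβ => ?_
      obtain ⟨b, -, rfl⟩ := mem_signVectorsOf.1 hβ
      rw [← eulerSum_of_isOpen_of_convex ℓ ((isOpen_openStar ℓ b).inter hO)
        ((convex_openStar ℓ b).inter hconv), eulerSum, Finset.mul_sum]
    _ = ∑ γ ∈ signVectorsOf ℓ O, ∑ β ∈ signVectorsOf ℓ (interval γ),
          codimSign ℓ β * codimSign ℓ γ := by
      refine Finset.sum_comm' fun β γ => ?_
      simp only [mem_signVectorsOf]
      constructor
      · rintro ⟨⟨b, hab, rfl⟩, g, ⟨hbg, hgO⟩, rfl⟩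
        exact ⟨⟨b, ⟨hab, hbg⟩, rfl⟩, g, hgO, rfl⟩
      · rintro ⟨⟨b, ⟨hab, hbg⟩, rfl⟩, g, hgO, rfl⟩
        exact ⟨⟨b, hab, rfl⟩, g, ⟨hbg, hgO⟩, rfl⟩
    _ = ∑ γ ∈ signVectorsOf ℓ O, if signVector ℓ a = γ then 1 else 0 := by
      refine Finset.sum_congr rfl fun γ hγ => ?_
      obtain ⟨c, -, rfl⟩ := mem_signVectorsOf.1 hγ
      rw [← Finset.sum_mul, ← eulerSum, eulerSum_interval, ite_mul, zero_mul, codimSign_mul_self]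
    _ = _ := by
      rw [Finset.sum_ite_eq]
      refine if_congr (mem_signVectorsOf.trans ?_) rfl rfl
      exact exists_congr fun f => and_comm

end Inversion

section DualArrangement

variable {V : Type*} [NormedAddCommGroup V] [NormedSpace ℝ V]

/-- The 1-dimensional flats of `H`, which index the hyperplanes of the dual arrangement. -/
def LineFlat (H : Finset (Submodule ℝ V)) : Type _ :=
  {l : Submodule ℝ V // IsFlat H l ∧ Module.finrank ℝ l = 1}

/-- The hyperplanes of the dual arrangement as kernels of functionals on the dual space: evaluation
at an arbitrary nonzero vector of each 1-dimensional flat. -/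
noncomputable def lineFlatEval (H : Finset (Submodule ℝ V)) (l : LineFlat H) :
    (V →L[ℝ] ℝ) →L[ℝ] ℝ :=
  ContinuousLinearMap.apply ℝ ℝ ((finrank_eq_one_iff'.1 l.2.2).choose : V)

variable {H : Finset (Submodule ℝ V)} {a b f g : V →L[ℝ] ℝ} {x : V}

instance : Finite (LineFlat H) := by
  refine Set.Finite.to_subtype (s := {l | IsFlat H l ∧ Module.finrank ℝ l = 1}) ?_
  refine (H.powerset.finite_toSet.image fun J => J.inf id).subset ?_
  rintro l ⟨⟨J, hJ, rfl⟩, -⟩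
  exact ⟨J, Finset.mem_powerset.2 hJ, rfl⟩

theorem exists_lineFlatEval_eq (l : LineFlat H) :
    ∃ v ∈ l.1, v ≠ 0 ∧ (∀ x ∈ l.1, ∃ r : ℝ, r • v = x) ∧ ∀ f, lineFlatEval H l f = f v := by
  obtain ⟨hne, hgen⟩ := (finrank_eq_one_iff'.1 l.2.2).choose_spec
  refine ⟨_, Subtype.prop _, by simpa using hne, fun x hx => ?_, fun f => rfl⟩
  exact (hgen ⟨x, hx⟩).imp fun r hr => congrArg Subtype.val hr

theorem dualSameFace_iff :
    DualSameFace H f g ↔ signVector (lineFlatEval H) g = signVector (lineFlatEval H) f := by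
  rw [eq_comm, funext_iff]
  constructor
  · intro h l
    obtain ⟨v, hv, -, -, heval⟩ := exists_lineFlatEval_eq l
    simp only [signVector, heval, sign_eq_sign_iff]
    exact h l.1 l.2.1 l.2.2 v hv
  · intro h l hflat hrank x hx
    obtain ⟨v, -, -, hgen, heval⟩ := exists_lineFlatEval_eq (⟨l, hflat, hrank⟩ : LineFlat H)
    obtain ⟨r, rfl⟩ := hgen x hx
    have := h ⟨l, hflat, hrank⟩
    simp only [signVector, heval] at this
    rw [← sign_eq_sign_iff, map_smul f, map_smul g, smul_eq_mul, smul_eq_mul, sign_mul,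
      sign_mul, this]

theorem isDualFace_iff {B : Set (V →L[ℝ] ℝ)} :
    IsDualFace H B ↔ ∃ b, B = signFace (lineFlatEval H) (signVector (lineFlatEval H) b) := by
  simp only [IsDualFace, dualSameFace_iff, signFace]

theorem lineFlatEval_ne_zero (l : LineFlat H) : lineFlatEval H l ≠ 0 := by
  obtain ⟨v, -, hv, -, heval⟩ := exists_lineFlatEval_eq l
  obtain ⟨f, hf⟩ := SeparatingDual.exists_ne_zero (R := ℝ) hv
  exact fun h => hf ((heval f).symm.trans (DFunLike.congr_fun h f))

theorem mem_bigCone_iff {A : Set (V →L[ℝ] ℝ)} :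
    x ∈ bigCone A ↔ ¬(A ∩ {f | f x < 0}).Nonempty := by
  simp [bigCone, Set.Nonempty]

theorem mem_smallCone_iff :
    x ∈ smallCone H (signFace (lineFlatEval H) (signVector (lineFlatEval H) b)) ↔
      ¬(openStar (lineFlatEval H) (signVector (lineFlatEval H) b) ∩ {f | f x < 0}).Nonempty := by
  simp only [smallCone, Set.mem_iInter, Set.mem_ofPred_eq, IsDualChamber, isDualFace_iff]
  constructor
  · rintro h hne
    have hO : IsOpen (openStar (lineFlatEval H) (signVector (lineFlatEval H) b) ∩ {f | f x < 0}) :=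
      (isOpen_openStar _ b).inter (isOpen_lt (by fun_prop) continuous_const)
    obtain ⟨f, ⟨hbf, hfx⟩, hf⟩ := exists_forall_ne_zero_mem_of_isOpen lineFlatEval_ne_zero hO hne
    exact hfx.out.not_ge (h _ ⟨⟨⟨f, rfl⟩, isOpen_signFace_of_forall_ne_zero hf⟩,
      signFace_subset_closure_iff.2 hbf⟩ f rfl)
  · rintro h _ ⟨⟨⟨c, rfl⟩, -⟩, hbc⟩ f hf
    by_contra! hfx
    have hf : signVector (lineFlatEval H) f = signVector (lineFlatEval H) c := hf
    exact h ⟨f, (signFace_subset_closure_iff.1 hbc).trans (hf ▸ SignLE.refl _), hfx⟩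

theorem neg_one_pow_codim_signFace [FiniteDimensional ℝ V] (σ : LineFlat H → SignType) :
    (-1 : ℤ) ^ (Module.finrank ℝ V -
        Module.finrank ℝ (Submodule.span ℝ (signFace (lineFlatEval H) σ))) =
      codimSign (lineFlatEval H) σ := by
  rw [codimSign, ← (LinearMap.toContinuousLinearMap (𝕜 := ℝ) (E := V) (F' := ℝ)).finrank_eq,
    ← Subspace.dual_finrank_eq]

open Classical in
theorem dualFaces_above_eq_image {F : Finset (Set (V →L[ℝ] ℝ))}
    (hF : ∀ B : Set (V →L[ℝ] ℝ), B ∈ F ↔ IsDualFace H B ∧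
      signFace (lineFlatEval H) (signVector (lineFlatEval H) a) ⊆ closure B) :
    F = (signVectorsOf (lineFlatEval H)
      (openStar (lineFlatEval H) (signVector (lineFlatEval H) a))).image
        (signFace (lineFlatEval H)) := by
  ext B
  simp only [hF, isDualFace_iff, Finset.mem_image, mem_signVectorsOf]
  constructor
  · rintro ⟨⟨b, rfl⟩, hab⟩
    exact ⟨_, ⟨b, signFace_subset_closure_iff.1 hab, rfl⟩, rfl⟩
  · rintro ⟨_, ⟨b, hab, rfl⟩, rfl⟩
    exact ⟨⟨b, rfl⟩, signFace_subset_closure_iff.2 hab⟩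

open Classical in
theorem indicator_bigCone (A : Set (V →L[ℝ] ℝ)) (x : V) :
    (bigCone A).indicator (fun _ => (1 : ℤ)) x =
      1 - if (A ∩ {f | f x < 0}).Nonempty then 1 else 0 := by
  rw [Set.indicator_apply, if_congr mem_bigCone_iff rfl rfl]
  split_ifs <;> rfl

open Classical in
theorem indicator_smallCone (b : V →L[ℝ] ℝ) (x : V) :
    (smallCone H (signFace (lineFlatEval H) (signVector (lineFlatEval H) b))).indicator
        (fun _ => (1 : ℤ)) x =
      1 - if (openStar (lineFlatEval H) (signVector (lineFlatEval H) b) ∩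
        {f | f x < 0}).Nonempty then 1 else 0 := by
  rw [Set.indicator_apply, if_congr mem_smallCone_iff rfl rfl]
  split_ifs <;> rfl

end DualArrangement

theorem statement6_general {V : Type*} [NormedAddCommGroup V] [NormedSpace ℝ V]
    [FiniteDimensional ℝ V] (H : Finset (Submodule ℝ V))
    (A : Set (V →L[ℝ] ℝ)) (hA : IsDualFace H A)
    (F : Finset (Set (V →L[ℝ] ℝ)))
    (hF : ∀ B : Set (V →L[ℝ] ℝ), B ∈ F ↔ IsDualFace H B ∧ A ⊆ closure B)
    (x : V) :
    Set.indicator (bigCone A) (fun _ => (1 : ℤ)) x =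
      ∑ B ∈ F,
        (-1 : ℤ) ^ (Module.finrank ℝ V - Module.finrank ℝ (Submodule.span ℝ B)) *
          Set.indicator (smallCone H B) (fun _ => (1 : ℤ)) x := by
  classical
  obtain ⟨a, rfl⟩ := isDualFace_iff.1 hA
  let ℓ := lineFlatEval H
  let star := openStar ℓ (signVector ℓ a)
  let O : Set (V →L[ℝ] ℝ) := {f | f x < 0}
  have hO : IsOpen O := isOpen_lt (by fun_prop) continuous_const
  have hconv : Convex ℝ O :=
    convex_halfSpace_lt (ContinuousLinearMap.apply ℝ ℝ x).toLinearMap.isLinear 0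
  have hone : ∑ β ∈ signVectorsOf ℓ star, codimSign ℓ β = 1 :=
    (eulerSum_of_isOpen_of_convex ℓ (isOpen_openStar ℓ a) (convex_openStar ℓ a)).trans
      (if_pos ⟨a, self_mem_openStar ℓ a⟩)
  symm
  rw [dualFaces_above_eq_image hF, Finset.sum_image (injOn_signFace ℓ star), indicator_bigCone]
  calc
    _ = ∑ β ∈ signVectorsOf ℓ star,
          codimSign ℓ β * (1 - if (openStar ℓ β ∩ O).Nonempty then 1 else 0) := by
      refine Finset.sum_congr rfl fun β hβ => ?_
      obtain ⟨b, -, rfl⟩ := mem_signVectorsOf.1 hβ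
      rw [neg_one_pow_codim_signFace, indicator_smallCone]
    _ = 1 - if (signFace ℓ (signVector ℓ a) ∩ O).Nonempty then 1 else 0 := by
      simp only [mul_sub, mul_one, Finset.sum_sub_distrib, hone,
        sum_codimSign_mul_openStar_inter_nonempty ℓ a hO hconv, star]

/-- inclusion–exclusion for big dual cones: for every dual face `A∨`
and every `x ∈ V`,
`1_{U(A∨)}(x) = Σ_{B∨ ≥ A∨} (−1)^{n − dim B∨} · 1_{V(B∨)}(x)`. -/
theorem statement6 {V : Type*} [NormedAddCommGroup V] [NormedSpace ℝ V]
    [FiniteDimensional ℝ V] (H : Finset (Submodule ℝ V))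
    (hHyp : ∀ W ∈ H, ∃ f : V →ₗ[ℝ] ℝ, f ≠ 0 ∧ LinearMap.ker f = W)
    (hEss : (⋂ W ∈ H, (W : Set V)) = {0})
    (A : Set (V →L[ℝ] ℝ)) (hA : IsDualFace H A)
    (F : Finset (Set (V →L[ℝ] ℝ)))
    (hF : ∀ B : Set (V →L[ℝ] ℝ), B ∈ F ↔ IsDualFace H B ∧ A ⊆ closure B)
    (x : V) :
    Set.indicator (bigCone A) (fun _ => (1 : ℤ)) x =
      ∑ B ∈ F,
        (-1 : ℤ) ^ (Module.finrank ℝ V - Module.finrank ℝ (Submodule.span ℝ B)) *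
          Set.indicator (smallCone H B) (fun _ => (1 : ℤ)) x := by
  exact statement6_general H A hA F hF x
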